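/- Consider a quadratic objective with constant positive definite Hessian H = AᵀA + M and minimizer w⋆, so that ∇f(w) = H(w − w⋆). Suppose the sketching assumption holds, i.e., ‖UᵀSᵢSᵢᵀU − I_ρ‖₂ ≤ η for every i and ‖UᵀSSᵀU − I_ρ‖₂ ≤ η/√m, and let α := ϑ·(η/√m + η²/(1−η)) with ϑ = σ_max(AᵀA)/(σ_max(AᵀA) + σ_min(M)); assume α < 1/√2. Define the GIANT iteration w_{t+1} := w_t − (1/m)∑ᵢ H̃ᵢ⁻¹ ∇f(w_t). Then for every t ≥ 0, ‖w_t − w⋆‖₂ ≤ (α/√(1 − α²))^t · √κ · ‖w_0 − w⋆‖₂, where κ := σ_max(H)/σ_min(H) is the condition number of H. -/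

import Mathlib

/-!
Write `H = BᵀB` with `B` invertible and let `e t = w t - w⋆`. The iteration becomes
`B e (t + 1) = (1 - (1/m) ∑ᵢ B H̃ᵢ⁻¹ Bᵀ) B e t`, and `B H̃ᵢ⁻¹ Bᵀ = (1 + Δᵢ)⁻¹` where
`Δᵢ = Gᵀ (Uᵀ Sᵢ Sᵢᵀ U - 1) G` and `G = Uᵀ A B⁻¹`, because `U Uᵀ A = A`.

The Rayleigh bounds give `AᵀA ≼ ϑ H` (`Giant.gram_le_theta`), that is `‖G‖² ≤ ϑ`, so the sketching
assumption yields `‖Δᵢ‖ ≤ ϑ η` and `‖(1/m) ∑ᵢ Δᵢ‖ ≤ ϑ η / √m`. Since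
`1 - (1 + Δ)⁻¹ = Δ - Δ (1 + Δ)⁻¹ Δ`, averaging gives
`‖1 - (1/m) ∑ᵢ (1 + Δᵢ)⁻¹‖ ≤ ϑ η / √m + (ϑ η)² / (1 - ϑ η) ≤ α`
(`Giant.norm_one_sub_average_inv_le`, `Giant.norm_one_sub_precond_le`).

Hence the `H`-norm `‖B e t‖` contracts by the factor `α ≤ α / √(1 - α²)` at each step, and passing
between the `H`-norm and the Euclidean norm costs `√κ`.
-/

open Matrix

/-- Spectral norm of a real matrix: operator norm of the induced map between
Euclidean spaces. -/
noncomputable def specNorm {m n : ℕ} (A : Matrix (Fin m) (Fin n) ℝ) : ℝ :=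
  ‖LinearMap.toContinuousLinearMap (Matrix.toEuclideanLin A)‖

/-- Largest eigenvalue of a (symmetric) real matrix, as the supremum of its spectrum. -/
noncomputable def sigmaMax {d : ℕ} (A : Matrix (Fin d) (Fin d) ℝ) : ℝ :=
  sSup (spectrum ℝ A)

/-- Smallest eigenvalue of a (symmetric) real matrix, as the infimum of its spectrum. -/
noncomputable def sigmaMin {d : ℕ} (A : Matrix (Fin d) (Fin d) ℝ) : ℝ :=
  sInf (spectrum ℝ A)

namespace Giant

/-! ### Rayleigh bounds for the extreme eigenvalues -/

section Spectrum

variable {d : ℕ} {N : Matrix (Fin d) (Fin d) ℝ}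

/-- Upper Rayleigh bound: `σ_max(N) • 1 - N` has nonnegative spectrum, hence is positive
semidefinite. -/
lemma rayleigh_le (hN : N.IsHermitian) (x : Fin d → ℝ) :
    x ⬝ᵥ (N *ᵥ x) ≤ sigmaMax N * (x ⬝ᵥ x) := by
  have hps : (algebraMap ℝ (Matrix (Fin d) (Fin d) ℝ) (sigmaMax N) - N).PosSemidef := by
    rw [posSemidef_iff_isHermitian_and_spectrum_nonneg]
    constructor
    · refine IsHermitian.sub ?_ hN
      simp [algebraMap_eq_diagonal]
    · rw [← spectrum.singleton_sub_eq]
      rintro _ ⟨_, rfl, b, hb, rfl⟩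
      exact sub_nonneg.2 (le_csSup N.finite_spectrum.bddAbove hb)
  have h := hps.dotProduct_mulVec_nonneg x
  simp only [star_trivial, sub_mulVec, dotProduct_sub, Algebra.algebraMap_eq_smul_one,
    smul_mulVec, one_mulVec, dotProduct_smul, smul_eq_mul] at h
  linarith

/-- Lower Rayleigh bound: `N - σ_min(N) • 1` has nonnegative spectrum, hence is positive
semidefinite. -/
lemma le_rayleigh (hN : N.IsHermitian) (x : Fin d → ℝ) :
    sigmaMin N * (x ⬝ᵥ x) ≤ x ⬝ᵥ (N *ᵥ x) := by
  have hps : (N - algebraMap ℝ (Matrix (Fin d) (Fin d) ℝ) (sigmaMin N)).PosSemidef := by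
    rw [posSemidef_iff_isHermitian_and_spectrum_nonneg]
    constructor
    · refine IsHermitian.sub hN ?_
      simp [algebraMap_eq_diagonal]
    · rw [← spectrum.sub_singleton_eq]
      rintro _ ⟨b, hb, _, rfl, rfl⟩
      exact sub_nonneg.2 (csInf_le N.finite_spectrum.bddBelow hb)
  have h := hps.dotProduct_mulVec_nonneg x
  simp only [star_trivial, sub_mulVec, dotProduct_sub, Algebra.algebraMap_eq_smul_one,
    smul_mulVec, one_mulVec, dotProduct_smul, smul_eq_mul] at h
  linarith

lemma sigmaMax_nonneg (hN : N.PosSemidef) : 0 ≤ sigmaMax N :=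
  Real.sSup_nonneg fun _ hx => (posSemidef_iff_isHermitian_and_spectrum_nonneg.1 hN).2 hx

lemma sigmaMin_nonneg (hN : N.PosSemidef) : 0 ≤ sigmaMin N :=
  Real.sInf_nonneg fun _ hx => (posSemidef_iff_isHermitian_and_spectrum_nonneg.1 hN).2 hx

lemma sigmaMin_pos (hd : 0 < d) (hN : N.PosDef) : 0 < sigmaMin N := by
  have hr := hN.1.spectrum_real_eq_range_eigenvalues
  have hne : (spectrum ℝ N).Nonempty := by
    rw [hr]; exact ⟨_, ⟨0, hd⟩, rfl⟩
  have hmem : sigmaMin N ∈ spectrum ℝ N := hne.csInf_mem N.finite_spectrum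
  rw [hr] at hmem
  obtain ⟨i, hi⟩ := hmem
  rw [← hi]
  exact hN.eigenvalues_pos i

end Spectrum

lemma normSq_toLp {k : ℕ} (x : Fin k → ℝ) : ‖WithLp.toLp 2 x‖ ^ 2 = x ⬝ᵥ x := by
  rw [EuclideanSpace.norm_sq_eq]
  simp [dotProduct, sq]

lemma mulVec_dotProduct_mulVec {k l : ℕ} (G : Matrix (Fin k) (Fin l) ℝ) (x : Fin l → ℝ) :
    (G *ᵥ x) ⬝ᵥ (G *ᵥ x) = x ⬝ᵥ ((Gᵀ * G) *ᵥ x) := by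
  rw [← mulVec_mulVec, dotProduct_mulVec x, vecMul_transpose]

/-! ### The comparison of `AᵀA` with `AᵀA + M` -/

section Theta

variable {d n : ℕ} {A : Matrix (Fin n) (Fin d) ℝ} {M : Matrix (Fin d) (Fin d) ℝ}

lemma posSemidef_gram (A : Matrix (Fin n) (Fin d) ℝ) : (Aᵀ * A).PosSemidef := by
  simpa using posSemidef_conjTranspose_mul_self A

/-- If `σ_max(AᵀA) = 0` then `AᵀA` contributes nothing to the quadratic form of `AᵀA + M`, so `M`
itself is positive definite; hence the denominator of `ϑ` never vanishes. -/
lemma theta_den_pos (hd : 0 < d) (hM : M.PosSemidef) (hH : (Aᵀ * A + M).PosDef) :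
    0 < sigmaMax (Aᵀ * A) + sigmaMin M := by
  rcases (sigmaMax_nonneg (posSemidef_gram A)).lt_or_eq with h | h
  · linarith [sigmaMin_nonneg hM]
  · have hMp : M.PosDef := by
      refine .of_dotProduct_mulVec_pos hM.1 fun x hx => ?_
      have h1 := hH.dotProduct_mulVec_pos hx
      have h2 := rayleigh_le (posSemidef_gram A).1 x
      rw [← h, zero_mul] at h2
      simp only [star_trivial, add_mulVec, dotProduct_add] at h1 ⊢
      linarith
    linarith [sigmaMin_pos hd hMp]

/-- `AᵀA ≼ ϑ (AᵀA + M)`, since `(1 - ϑ) AᵀA ≼ (1 - ϑ) σ_max(AᵀA) = ϑ σ_min(M) ≼ ϑ M`. -/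
lemma gram_le_theta (hd : 0 < d) (hM : M.PosSemidef) (hH : (Aᵀ * A + M).PosDef)
    (x : Fin d → ℝ) :
    x ⬝ᵥ ((Aᵀ * A) *ᵥ x) ≤ sigmaMax (Aᵀ * A) / (sigmaMax (Aᵀ * A) + sigmaMin M) *
      (x ⬝ᵥ ((Aᵀ * A + M) *ᵥ x)) := by
  have hpos := theta_den_pos hd hM hH
  have h1 := rayleigh_le (posSemidef_gram A).1 x
  have h2 := le_rayleigh hM.1 x
  have h3 := sigmaMax_nonneg (posSemidef_gram A)
  have h4 := sigmaMin_nonneg hM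
  rw [div_mul_eq_mul_div, le_div_iff₀ hpos, add_mulVec, dotProduct_add]
  nlinarith [mul_le_mul_of_nonneg_left h1 h4, mul_le_mul_of_nonneg_left h2 h3]

end Theta

/-! ### Averages of inverses in a normed ring -/

/-- In a normed ring, if `K = (1 + Δ)⁻¹` with `‖Δ‖ ≤ δ < 1`, then `K = 1 - Δ + Δ K Δ` is `1 - Δ` up
to an error of second order. -/
lemma norm_one_sub_inv_sub_le {R : Type*} [NormedRing R] [NormOneClass R] {Δ K : R} {δ : ℝ}
    (hδ : ‖Δ‖ ≤ δ) (hδ1 : δ < 1) (hl : (1 + Δ) * K = 1) (hr : K * (1 + Δ) = 1) :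
    ‖1 - K - Δ‖ ≤ δ ^ 2 / (1 - δ) := by
  have h0 : 0 ≤ δ := (norm_nonneg _).trans hδ
  have e1 : K = 1 - Δ * K := by rw [← hl]; noncomm_ring
  have e2 : K = 1 - K * Δ := by rw [← hr]; noncomm_ring
  have hK : ‖K‖ ≤ 1 / (1 - δ) := by
    have : ‖K‖ ≤ 1 + δ * ‖K‖ := calc
      ‖K‖ = ‖1 - Δ * K‖ := by rw [← e1]
      _ ≤ ‖(1 : R)‖ + ‖Δ * K‖ := norm_sub_le _ _
      _ ≤ 1 + δ * ‖K‖ := by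
        rw [norm_one]
        gcongr
        exact (norm_mul_le _ _).trans (by gcongr)
    rw [le_div_iff₀ (by linarith)]
    linarith
  have e3 : 1 - K - Δ = -(Δ * K * Δ) := by
    have : Δ * K = Δ - Δ * K * Δ := by
      conv_lhs => rw [e2]
      noncomm_ring
    have h1 : 1 - K = Δ * K := by rw [sub_eq_iff_eq_add]; exact (sub_eq_iff_eq_add'.1 e1.symm)
    rw [h1, sub_eq_iff_eq_add, neg_add_eq_sub]; exact this
  rw [e3, norm_neg]
  calc ‖Δ * K * Δ‖ ≤ ‖Δ‖ * ‖K‖ * ‖Δ‖ :=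
        (norm_mul_le _ _).trans (by gcongr; exact norm_mul_le _ _)
    _ ≤ δ * (1 / (1 - δ)) * δ := by gcongr
    _ = δ ^ 2 / (1 - δ) := by ring

/-- Averaging inverses of the perturbations `1 + Δ i`: the first-order terms are averaged before
their norm is taken, so only the second-order terms cost `δ ^ 2 / (1 - δ)`. -/
lemma norm_one_sub_average_inv_le {R : Type*} [NormedRing R] [NormedAlgebra ℝ R] [NormOneClass R]
    {m : ℕ} (hm : 0 < m) {Δ K : Fin m → R} {δ ε : ℝ}
    (hδ : ∀ i, ‖Δ i‖ ≤ δ) (hδ1 : δ < 1) (hε : ‖(m : ℝ)⁻¹ • ∑ i, Δ i‖ ≤ ε)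
    (hl : ∀ i, (1 + Δ i) * K i = 1) (hr : ∀ i, K i * (1 + Δ i) = 1) :
    ‖1 - (m : ℝ)⁻¹ • ∑ i, K i‖ ≤ ε + δ ^ 2 / (1 - δ) := by
  have hm' : (m : ℝ) ≠ 0 := by positivity
  have e : 1 - (m : ℝ)⁻¹ • ∑ i, K i
      = (m : ℝ)⁻¹ • ∑ i, Δ i + (m : ℝ)⁻¹ • ∑ i, (1 - K i - Δ i) := by
    have h1 : (m : ℝ)⁻¹ • (m • (1 : R)) = 1 := by
      rw [← Nat.cast_smul_eq_nsmul ℝ, smul_smul, inv_mul_cancel₀ hm', one_smul]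
    simp only [Finset.sum_sub_distrib, smul_sub, Finset.sum_const, Finset.card_univ,
      Fintype.card_fin, h1]
    abel
  rw [e]
  refine (norm_add_le _ _).trans (add_le_add hε ?_)
  rw [norm_smul, Real.norm_of_nonneg (by positivity), inv_mul_le_iff₀ (by positivity)]
  calc ‖∑ i, (1 - K i - Δ i)‖ ≤ ∑ _i : Fin m, δ ^ 2 / (1 - δ) :=
        norm_sum_le_of_le _ fun i _ => norm_one_sub_inv_sub_le (hδ i) hδ1 (hl i) (hr i)
    _ = m * (δ ^ 2 / (1 - δ)) := by simp

/-! ### The sketched Hessians in the coordinates of `AᵀA + M` -/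

section L2

open scoped Matrix.Norms.L2Operator

lemma specNorm_nonneg {k l : ℕ} (G : Matrix (Fin k) (Fin l) ℝ) : 0 ≤ specNorm G := norm_nonneg _

/-- `specNorm` is definitionally Mathlib's `L2` operator norm of a matrix. -/
lemma norm_mulVec_le {k l : ℕ} (G : Matrix (Fin k) (Fin l) ℝ) (x : Fin l → ℝ) :
    ‖WithLp.toLp 2 (G *ᵥ x)‖ ≤ specNorm G * ‖WithLp.toLp 2 x‖ :=
  l2_opNorm_mulVec G (WithLp.toLp 2 x)

lemma norm_sq_le_of_dotProduct {k l : ℕ} (G : Matrix (Fin k) (Fin l) ℝ) {c : ℝ} (hc : 0 ≤ c)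
    (h : ∀ x, (G *ᵥ x) ⬝ᵥ (G *ᵥ x) ≤ c * (x ⬝ᵥ x)) : ‖G‖ ^ 2 ≤ c := by
  have : ‖G‖ ≤ √c := by
    rw [l2_opNorm_def]
    refine ContinuousLinearMap.opNorm_le_bound _ (Real.sqrt_nonneg _) fun x => ?_
    refine (sq_le_sq₀ (norm_nonneg _) (by positivity)).1 ?_
    rw [mul_pow, Real.sq_sqrt hc, ← WithLp.toLp_ofLp 2 x, normSq_toLp x.ofLp]
    refine le_trans (le_of_eq ?_) (h x.ofLp)
    exact normSq_toLp (G *ᵥ x.ofLp)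
  calc ‖G‖ ^ 2 ≤ √c ^ 2 := by gcongr
    _ = c := Real.sq_sqrt hc

lemma norm_conj_le {k l : ℕ} (G : Matrix (Fin k) (Fin l) ℝ) (E : Matrix (Fin k) (Fin k) ℝ)
    {c ε : ℝ} (hG : ‖G‖ ^ 2 ≤ c) (hE : specNorm E ≤ ε) : ‖Gᵀ * E * G‖ ≤ c * ε := by
  have hE' : ‖E‖ ≤ ε := hE
  have hc : 0 ≤ c := (sq_nonneg _).trans hG
  have hT : ‖Gᵀ‖ = ‖G‖ := by simpa using l2_opNorm_conjTranspose G
  calc ‖Gᵀ * E * G‖ ≤ ‖Gᵀ‖ * ‖E‖ * ‖G‖ :=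
        (l2_opNorm_mul _ _).trans (by gcongr; exact l2_opNorm_mul _ _)
    _ = ‖G‖ ^ 2 * ‖E‖ := by rw [hT]; ring
    _ ≤ c * ε := by gcongr

/-- `U Uᵀ` is the orthogonal projection onto the column space of `U`, so it fixes every matrix
with columns in that space. -/
lemma proj_mul {n ρ d : ℕ} {A : Matrix (Fin n) (Fin d) ℝ} {U : Matrix (Fin n) (Fin ρ) ℝ}
    (hUorth : Uᵀ * U = 1) (hUA : LinearMap.range U.mulVecLin = LinearMap.range A.mulVecLin) :
    U * (Uᵀ * A) = A := by
  refine ext_of_mulVec_single fun j => ?_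
  have hmem : A *ᵥ Pi.single j 1 ∈ LinearMap.range U.mulVecLin := by
    rw [hUA]; exact ⟨_, rfl⟩
  obtain ⟨z, hz⟩ := hmem
  rw [mulVecLin_apply] at hz
  rw [← mulVec_mulVec, ← mulVec_mulVec, ← hz, mulVec_mulVec z, hUorth, one_mulVec]

/-- `B` plays the part of `H^{1/2}`; its symmetry is never needed. -/
lemma exists_gram_factor {d : ℕ} {H : Matrix (Fin d) (Fin d) ℝ} (hH : H.PosDef) :
    ∃ B : Matrix (Fin d) (Fin d) ℝ, IsUnit B.det ∧ Bᵀ * B = H := by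
  open scoped MatrixOrder in
  obtain ⟨B, hB⟩ := CStarAlgebra.nonneg_iff_eq_star_mul_self.mp hH.posSemidef.nonneg
  have hB' : Bᵀ * B = H := by
    rw [hB, star_eq_conjTranspose, conjTranspose_eq_transpose_of_trivial]
  refine ⟨B, ?_, hB'⟩
  have hdet := hH.det_pos
  rw [← hB', det_mul, det_transpose] at hdet
  exact isUnit_iff_ne_zero.2 fun h0 => by simp [h0] at hdet

/-- The core estimate. With `AᵀA + M = BᵀB`, the averaged inverse of the sketched Hessians,
conjugated by `B`, is within `ϑ (η / √m + η² / (1 - η))` of the identity. -/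
lemma norm_one_sub_precond_le {n d ρ s m : ℕ} (hm : 0 < m) (hd : 0 < d)
    {η : ℝ} (hη : η ∈ Set.Ioo (0 : ℝ) 1)
    {A : Matrix (Fin n) (Fin d) ℝ} {U : Matrix (Fin n) (Fin ρ) ℝ}
    (hUorth : Uᵀ * U = 1)
    (hUA : LinearMap.range U.mulVecLin = LinearMap.range A.mulVecLin)
    {M : Matrix (Fin d) (Fin d) ℝ} (hM : M.PosSemidef) (hH : (Aᵀ * A + M).PosDef)
    {S : Fin m → Matrix (Fin n) (Fin s) ℝ}
    (hSi : ∀ i, specNorm (Uᵀ * (S i * (S i)ᵀ) * U - 1) ≤ η)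
    (hS : specNorm (Uᵀ * ((m : ℝ)⁻¹ • ∑ i, S i * (S i)ᵀ) * U - 1) ≤ η / Real.sqrt m)
    (hHi : ∀ i, (Aᵀ * (S i * (S i)ᵀ) * A + M).PosDef)
    {ϑ : ℝ} (hϑ : ϑ = sigmaMax (Aᵀ * A) / (sigmaMax (Aᵀ * A) + sigmaMin M))
    {B : Matrix (Fin d) (Fin d) ℝ} (hBdet : IsUnit B.det) (hB : Bᵀ * B = Aᵀ * A + M) :
    specNorm (1 - (m : ℝ)⁻¹ • ∑ i, B * (Aᵀ * (S i * (S i)ᵀ) * A + M)⁻¹ * Bᵀ)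
      ≤ ϑ * (η / Real.sqrt m + η ^ 2 / (1 - η)) := by
  obtain ⟨hη0, hη1⟩ := hη
  have : Nonempty (Fin d) := ⟨⟨0, hd⟩⟩
  have hm' : (m : ℝ) ≠ 0 := by positivity
  have hden := theta_den_pos hd hM hH
  have hs1 := sigmaMax_nonneg (posSemidef_gram A)
  have hs2 := sigmaMin_nonneg hM
  have hϑ0 : 0 ≤ ϑ := by rw [hϑ]; positivity
  have hϑ1 : ϑ ≤ 1 := by rw [hϑ, div_le_one hden]; linarith
  have hBB : B * B⁻¹ = 1 := mul_nonsing_inv _ hBdet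
  have hBB' : B⁻¹ * B = 1 := nonsing_inv_mul _ hBdet
  have hBt : (B⁻¹)ᵀ * Bᵀ = 1 := by rw [← transpose_mul, hBB, transpose_one]
  have hP := proj_mul hUorth hUA
  have hPt : Aᵀ * U * Uᵀ = Aᵀ := by
    have := congrArg transpose hP
    simpa [transpose_mul, Matrix.mul_assoc] using this
  set G : Matrix (Fin ρ) (Fin d) ℝ := Uᵀ * A * B⁻¹ with hGdef
  -- `‖G‖² ≤ ϑ` restates `AᵀA ≼ ϑ BᵀB`, evaluated at `B⁻¹ x`.
  have hG : ‖G‖ ^ 2 ≤ ϑ := by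
    refine norm_sq_le_of_dotProduct G hϑ0 fun x => ?_
    have h1 := gram_le_theta hd hM hH (B⁻¹ *ᵥ x)
    rw [← hϑ, ← hB, ← mulVec_dotProduct_mulVec B, mulVec_mulVec x B, hBB, one_mulVec] at h1
    refine le_trans (le_of_eq ?_) h1
    have e : (Uᵀ * A)ᵀ * (Uᵀ * A) = Aᵀ * A := by
      rw [transpose_mul, transpose_transpose, Matrix.mul_assoc, hP]
    rw [hGdef, ← mulVec_mulVec, mulVec_dotProduct_mulVec, e]
  let Δ : Fin m → Matrix (Fin d) (Fin d) ℝ := fun i => Gᵀ * (Uᵀ * (S i * (S i)ᵀ) * U - 1) * G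
  have hGt : Gᵀ = (B⁻¹)ᵀ * (Aᵀ * U) := by simp [hGdef, transpose_mul]
  have key : ∀ i, 1 + Δ i = (B⁻¹)ᵀ * (Aᵀ * (S i * (S i)ᵀ) * A + M) * B⁻¹ := by
    intro i
    have e1 : (Aᵀ * U) * (Uᵀ * (S i * (S i)ᵀ) * U - 1) * (Uᵀ * A)
        = Aᵀ * (S i * (S i)ᵀ) * A - Aᵀ * A := by
      calc _ = (Aᵀ * U * Uᵀ) * (S i * (S i)ᵀ) * (U * (Uᵀ * A)) - Aᵀ * (U * (Uᵀ * A)) := by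
            simp only [Matrix.mul_sub, Matrix.sub_mul, Matrix.mul_assoc, Matrix.one_mul]
        _ = _ := by rw [hPt, hP]
    have e2 : Aᵀ * (S i * (S i)ᵀ) * A + M
        = Bᵀ * B + (Aᵀ * U) * (Uᵀ * (S i * (S i)ᵀ) * U - 1) * (Uᵀ * A) := by
      rw [e1, hB]; abel
    have e3 : (B⁻¹)ᵀ * (Bᵀ * B) * B⁻¹ = 1 := by
      rw [← Matrix.mul_assoc, hBt, Matrix.one_mul, hBB]
    rw [e2, Matrix.mul_add, Matrix.add_mul, e3]
    rw [show Δ i = Gᵀ * (Uᵀ * (S i * (S i)ᵀ) * U - 1) * G from rfl, hGt, hGdef]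
    simp only [Matrix.mul_assoc]
  have hδ : ∀ i, ‖Δ i‖ ≤ ϑ * η := fun i => norm_conj_le G _ hG (hSi i)
  have hδ1 : ϑ * η < 1 := by nlinarith
  have hε : ‖(m : ℝ)⁻¹ • ∑ i, Δ i‖ ≤ ϑ * (η / Real.sqrt m) := by
    have e : (m : ℝ)⁻¹ • ∑ i, Δ i
        = Gᵀ * (Uᵀ * ((m : ℝ)⁻¹ • ∑ i, S i * (S i)ᵀ) * U - 1) * G := by
      have h1 : (1 : Matrix (Fin ρ) (Fin ρ) ℝ)
          = (m : ℝ)⁻¹ • ∑ _i : Fin m, (1 : Matrix (Fin ρ) (Fin ρ) ℝ) := by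
        rw [Finset.sum_const, Finset.card_univ, Fintype.card_fin, ← Nat.cast_smul_eq_nsmul ℝ,
          smul_smul, inv_mul_cancel₀ hm', one_smul]
      conv_rhs => rw [h1]
      simp only [Δ, Matrix.mul_smul, Matrix.smul_mul, Matrix.mul_sum, Matrix.sum_mul, ← smul_sub,
        ← Finset.sum_sub_distrib]
    rw [e]
    exact norm_conj_le G _ hG hS
  have hl : ∀ i, (1 + Δ i) * (B * (Aᵀ * (S i * (S i)ᵀ) * A + M)⁻¹ * Bᵀ) = 1 := by
    intro i
    have hu : IsUnit (Aᵀ * (S i * (S i)ᵀ) * A + M).det :=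
      isUnit_iff_ne_zero.2 (hHi i).det_pos.ne'
    rw [key i]
    calc _ = (B⁻¹)ᵀ * ((Aᵀ * (S i * (S i)ᵀ) * A + M) * ((B⁻¹ * B) *
            (Aᵀ * (S i * (S i)ᵀ) * A + M)⁻¹)) * Bᵀ := by simp only [Matrix.mul_assoc]
      _ = 1 := by rw [hBB', Matrix.one_mul, mul_nonsing_inv _ hu, Matrix.mul_one, hBt]
  refine (norm_one_sub_average_inv_le hm hδ hδ1 hε hl
    fun i => mul_eq_one_comm.1 (hl i)).trans ?_
  have hlast : (ϑ * η) ^ 2 / (1 - ϑ * η) ≤ ϑ * (η ^ 2 / (1 - η)) := by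
    rw [mul_div_assoc']
    apply div_le_div₀ (by positivity) _ (by linarith) (by nlinarith)
    rw [mul_pow]
    gcongr
    nlinarith
  linarith

end L2

end Giant

/-! ### Convergence of the iteration -/

/-- **Theorem 1 (global convergence of GIANT for quadratic objectives).**
For a quadratic objective with constant positive definite Hessian `H = AᵀA + M`
and minimizer `w⋆` (so `∇f(w) = H(w − w⋆)`), under the sketching assumption, the
GIANT iteration `w_{t+1} = w_t − (1/m)∑ᵢ H̃ᵢ⁻¹∇f(w_t)` satisfies
`‖w_t − w⋆‖₂ ≤ (α/√(1−α²))^t √κ ‖w_0 − w⋆‖₂` whenever `α < 1/√2`,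
where `α = ϑ(η/√m + η²/(1−η))` and `κ = σmax(H)/σmin(H)`. -/
theorem giant_quadratic_convergence
    (n d ρ s m : ℕ) (hm : 0 < m)
    (η : ℝ) (hη : η ∈ Set.Ioo (0 : ℝ) 1)
    (A : Matrix (Fin n) (Fin d) ℝ) (hrank : A.rank = ρ)
    (U : Matrix (Fin n) (Fin ρ) ℝ)
    (hUorth : Uᵀ * U = 1)
    (hUA : LinearMap.range U.mulVecLin = LinearMap.range A.mulVecLin)
    (M : Matrix (Fin d) (Fin d) ℝ) (hM : M.PosSemidef)
    (hH : (Aᵀ * A + M).PosDef)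
    (S : Fin m → Matrix (Fin n) (Fin s) ℝ)
    (hSi : ∀ i, specNorm (Uᵀ * (S i * (S i)ᵀ) * U - 1) ≤ η)
    (hS : specNorm (Uᵀ * ((m : ℝ)⁻¹ • ∑ i, S i * (S i)ᵀ) * U - 1) ≤ η / Real.sqrt m)
    (hHi : ∀ i, (Aᵀ * (S i * (S i)ᵀ) * A + M).PosDef)
    (ϑ α : ℝ)
    (hϑ : ϑ = sigmaMax (Aᵀ * A) / (sigmaMax (Aᵀ * A) + sigmaMin M))
    (hα : α = ϑ * (η / Real.sqrt m + η ^ 2 / (1 - η)))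
    (hαsmall : α < 1 / Real.sqrt 2)
    (wstar : EuclideanSpace ℝ (Fin d))
    (w : ℕ → EuclideanSpace ℝ (Fin d))
    (hiter : ∀ t, w (t + 1) = w t - (m : ℝ)⁻¹ •
      ∑ i, Matrix.toEuclideanCLM (𝕜 := ℝ) ((Aᵀ * (S i * (S i)ᵀ) * A + M)⁻¹)
        (Matrix.toEuclideanCLM (𝕜 := ℝ) (Aᵀ * A + M) (w t - wstar)))
    (κ : ℝ) (hκ : κ = sigmaMax (Aᵀ * A + M) / sigmaMin (Aᵀ * A + M)) :
    ∀ t : ℕ, ‖w t - wstar‖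
      ≤ (α / Real.sqrt (1 - α ^ 2)) ^ t * Real.sqrt κ * ‖w 0 - wstar‖ := by
  intro t
  rcases Nat.eq_zero_or_pos d with rfl | hd
  · have h0 : ∀ v : EuclideanSpace ℝ (Fin 0), ‖v‖ = 0 := fun v => by
      rw [Subsingleton.elim v 0, norm_zero]
    rw [h0, h0, mul_zero]
  obtain ⟨B, hBdet, hB⟩ := Giant.exists_gram_factor hH
  have hcore := Giant.norm_one_sub_precond_le hm hd hη hUorth hUA hM hH hSi hS hHi hϑ hBdet hB
  rw [← hα] at hcore
  have hα0 : 0 ≤ α := (Giant.specNorm_nonneg _).trans hcore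
  have hα1 : α < 1 := hαsmall.trans_le (by
    rw [div_le_one (by positivity)]; exact Real.one_le_sqrt.2 one_le_two)
  let E : ℕ → ℝ := fun t => ‖WithLp.toLp 2 (B *ᵥ (w t - wstar).ofLp)‖
  have hE : ∀ t, E t ^ 2 = (w t - wstar).ofLp ⬝ᵥ ((Aᵀ * A + M) *ᵥ (w t - wstar).ofLp) := by
    intro t
    rw [Giant.normSq_toLp, Giant.mulVec_dotProduct_mulVec, hB]
  -- One iteration multiplies `B (w t - w⋆)` by `1 - (1/m) ∑ᵢ B H̃ᵢ⁻¹ Bᵀ`.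
  have hstep : ∀ t, E (t + 1) ≤ α * E t := by
    intro t
    have e : B *ᵥ (w (t + 1) - wstar).ofLp
        = (1 - (m : ℝ)⁻¹ • ∑ i, B * (Aᵀ * (S i * (S i)ᵀ) * A + M)⁻¹ * Bᵀ) *ᵥ
          (B *ᵥ (w t - wstar).ofLp) := by
      rw [hiter t, ← hB, sub_right_comm, sub_mulVec, one_mulVec, smul_mulVec, sum_mulVec]
      generalize w t - wstar = v
      simp only [WithLp.ofLp_sub, WithLp.ofLp_smul, WithLp.ofLp_sum, ofLp_toEuclideanCLM,
        mulVec_sub, mulVec_smul, mulVec_sum, mulVec_mulVec, Matrix.mul_assoc]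
    calc E (t + 1) ≤ _ := by simp only [E, e]; exact Giant.norm_mulVec_le _ _
      _ ≤ α * E t := mul_le_mul_of_nonneg_right hcore (norm_nonneg _)
  have hpow : ∀ t, E t ≤ α ^ t * E 0 := by
    intro t
    induction t with
    | zero => simp
    | succ t ih =>
      calc E (t + 1) ≤ α * E t := hstep t
        _ ≤ α * (α ^ t * E 0) := by gcongr
        _ = α ^ (t + 1) * E 0 := by ring
  have hmin := Giant.sigmaMin_pos hd hH
  have hmax := Giant.sigmaMax_nonneg hH.posSemidef
  have hκ0 : 0 ≤ κ := by rw [hκ]; positivity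
  have hns : ∀ t, ‖w t - wstar‖ ^ 2 = (w t - wstar).ofLp ⬝ᵥ (w t - wstar).ofLp := fun t =>
    Giant.normSq_toLp (w t - wstar).ofLp
  -- Comparing the `H`-norm with the Euclidean norm at both ends costs `√κ`.
  have hmain : ‖w t - wstar‖ ≤ α ^ t * Real.sqrt κ * ‖w 0 - wstar‖ := by
    refine (sq_le_sq₀ (norm_nonneg _) (by positivity)).1 ?_
    have h1 := Giant.le_rayleigh hH.1 (w t - wstar).ofLp
    have h2 := Giant.rayleigh_le hH.1 (w 0 - wstar).ofLp
    rw [← hns, ← hE] at h1 h2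
    have h3 : E t ^ 2 ≤ (α ^ t * E 0) ^ 2 := pow_le_pow_left₀ (norm_nonneg _) (hpow t) 2
    rw [mul_pow, mul_pow, Real.sq_sqrt hκ0, hκ, mul_div_assoc', div_mul_eq_mul_div,
      le_div_iff₀ hmin]
    calc ‖w t - wstar‖ ^ 2 * sigmaMin (Aᵀ * A + M) ≤ E t ^ 2 := by rw [mul_comm]; exact h1
      _ ≤ (α ^ t) ^ 2 * E 0 ^ 2 := by rw [← mul_pow]; exact h3
      _ ≤ (α ^ t) ^ 2 * (sigmaMax (Aᵀ * A + M) * ‖w 0 - wstar‖ ^ 2) := by gcongr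
      _ = _ := by ring
  refine hmain.trans ?_
  have hs : α ≤ α / Real.sqrt (1 - α ^ 2) := by
    have : 0 < 1 - α ^ 2 := by nlinarith
    exact le_div_self hα0 (Real.sqrt_pos.2 this) (Real.sqrt_le_one.2 (by nlinarith))
  gcongr
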